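/- arXiv:1710.02969 — 3 statements merged into one kernel-verified Lean document; each statement's English description precedes it below -/
import Mathlib

section
/- Let φ be a 2-cocycle of Cend_{1,x} with values in a conformal bimodule M, and write φ_m = φ_m(x, x) ∈ M. Then x ∘₀ φ₂ = x ∘₁ φ₁ − φ₁ ∘₁ x, and for every m > 1, x ∘₀ φ_{m+1} = x ∘₁ φ_m − φ_m − φ₁ ∘_m x. -/
open Finset

/-- An associative conformal algebra over a field `F` of characteristic zero:
a left `F[D]`-module `A` (the action of `D` is recorded by the linear map `D`)
equipped with `F`-bilinear products `∘ₙ`, `n ∈ ℤ₊`, satisfying locality,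
the `D`-rules and the conformal associativity axiom. -/
structure ConfAlg (F : Type*) [Field F] (A : Type*) [AddCommGroup A] [Module F A] where
  D : A →ₗ[F] A
  mul : ℕ → A →ₗ[F] A →ₗ[F] A
  locality : ∀ a b : A, ∃ N : ℕ, ∀ n, N ≤ n → mul n a b = 0
  D_left : ∀ (n : ℕ) (a b : A), mul n (D a) b = -((n : F) • mul (n - 1) a b)
  D_right : ∀ (n : ℕ) (a b : A),
    mul n a (D b) = D (mul n a b) + (n : F) • mul (n - 1) a b
  assoc : ∀ (n m : ℕ) (a b c : A),
    mul m (mul n a b) c =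
      ∑ s ∈ Finset.range (n + 1),
        ((-1 : F) ^ s * (n.choose s : F)) • mul (n - s) a (mul (m + s) b c)

/-- `A`, with conformal structure `CA`, is (a copy of) the conformal algebra
`Cend_{1,x}`: the family `xB k = x^k`, `k ≥ 1`, together with all its
`D`-derivatives `D^i x^k`, is a free generating family (i.e. `{x^k : k ≥ 1}` is a
basis of `A` as a free `F[D]`-module) and the products on the basis are
`x^k ∘ₙ x^l = l(l-1)⋯(l-n+1) x^{k+l-n}` (zero for `n > l`). -/
def IsCend1x {F : Type*} [Field F] {A : Type*} [AddCommGroup A] [Module F A]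
    (CA : ConfAlg F A) (xB : ℕ → A) : Prop :=
  (LinearIndependent F fun p : ℕ × {k : ℕ // 1 ≤ k} => (CA.D ^ p.1) (xB p.2.1)) ∧
  (Submodule.span F (Set.range fun p : ℕ × {k : ℕ // 1 ≤ k} => (CA.D ^ p.1) (xB p.2.1)) = ⊤) ∧
  ∀ (k l n : ℕ), 1 ≤ k → 1 ≤ l →
    CA.mul n (xB k) (xB l) = (l.descFactorial n : F) • xB (k + l - n)

/-- A conformal bimodule `M` over the associative conformal algebra `(A, CA)`. -/
structure ConfBimod {F : Type*} [Field F] {A : Type*} [AddCommGroup A] [Module F A]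
    (CA : ConfAlg F A) (M : Type*) [AddCommGroup M] [Module F M] where
  D : M →ₗ[F] M
  lmul : ℕ → A →ₗ[F] M →ₗ[F] M
  rmul : ℕ → M →ₗ[F] A →ₗ[F] M
  loc_left : ∀ (a : A) (u : M), ∃ N : ℕ, ∀ n, N ≤ n → lmul n a u = 0
  loc_right : ∀ (u : M) (a : A), ∃ N : ℕ, ∀ n, N ≤ n → rmul n u a = 0
  D_la : ∀ (n : ℕ) (a : A) (u : M), lmul n (CA.D a) u = -((n : F) • lmul (n - 1) a u)
  D_lu : ∀ (n : ℕ) (a : A) (u : M),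
    lmul n a (D u) = D (lmul n a u) + (n : F) • lmul (n - 1) a u
  D_ru : ∀ (n : ℕ) (u : M) (a : A), rmul n (D u) a = -((n : F) • rmul (n - 1) u a)
  D_ra : ∀ (n : ℕ) (u : M) (a : A),
    rmul n u (CA.D a) = D (rmul n u a) + (n : F) • rmul (n - 1) u a
  assoc_aau : ∀ (m n : ℕ) (a b : A) (u : M),
    lmul n (CA.mul m a b) u =
      ∑ s ∈ Finset.range (m + 1),
        ((-1 : F) ^ s * (m.choose s : F)) • lmul (m - s) a (lmul (n + s) b u)
  assoc_uaa : ∀ (m n : ℕ) (u : M) (a b : A),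
    rmul n (rmul m u a) b =
      ∑ s ∈ Finset.range (m + 1),
        ((-1 : F) ^ s * (m.choose s : F)) • rmul (m - s) u (CA.mul (n + s) a b)
  assoc_aua : ∀ (m n : ℕ) (a : A) (u : M) (b : A),
    rmul n (lmul m a u) b =
      ∑ s ∈ Finset.range (m + 1),
        ((-1 : F) ^ s * (m.choose s : F)) • lmul (m - s) a (rmul (n + s) u b)

/-- A 2-cochain of a conformal algebra `(A, CA)` with coefficients in the
conformal bimodule `(M, B)`: a family of `F`-bilinear maps `f s : A × A → M`
satisfying the `D`-rules and locality. -/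
structure Cochain2 {F : Type*} [Field F] {A : Type*} [AddCommGroup A] [Module F A]
    {M : Type*} [AddCommGroup M] [Module F M]
    (CA : ConfAlg F A) (B : ConfBimod CA M) where
  f : ℕ → A →ₗ[F] A →ₗ[F] M
  D_left : ∀ (s : ℕ) (a b : A), f s (CA.D a) b = -((s : F) • f (s - 1) a b)
  D_right : ∀ (s : ℕ) (a b : A),
    f s a (CA.D b) = B.D (f s a b) + (s : F) • f (s - 1) a b
  loc : ∀ a b : A, ∃ N : ℕ, ∀ s, N ≤ s → f s a b = 0

/-- The 2-cocycle condition. -/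
def IsCocycle {F : Type*} [Field F] {A : Type*} [AddCommGroup A] [Module F A]
    {M : Type*} [AddCommGroup M] [Module F M]
    {CA : ConfAlg F A} {B : ConfBimod CA M} (φ : Cochain2 CA B) : Prop :=
  ∀ (n m : ℕ) (a b c : A),
    B.lmul n a (φ.f m b c) + φ.f n a (CA.mul m b c) =
      ∑ s ∈ Finset.range (n + 1), (n.choose s : F) •
        (φ.f (m + s) (CA.mul (n - s) a b) c + B.rmul (m + s) (φ.f (n - s) a b) c)

/-- `φ` is a 2-coboundary: `φ = δτ` for some `H`-linear 1-cochain `τ : A → M`. -/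
def IsCoboundary {F : Type*} [Field F] {A : Type*} [AddCommGroup A] [Module F A]
    {M : Type*} [AddCommGroup M] [Module F M]
    {CA : ConfAlg F A} {B : ConfBimod CA M} (φ : Cochain2 CA B) : Prop :=
  ∃ τ : A →ₗ[F] M, (∀ a : A, τ (CA.D a) = B.D (τ a)) ∧
    ∀ (n : ℕ) (a b : A),
      φ.f n a b = B.lmul n a (τ b) - τ (CA.mul n a b) + B.rmul n (τ a) b

namespace IsCend1x

variable {F : Type*} [Field F] {A : Type*} [AddCommGroup A] [Module F A]
  {CA : ConfAlg F A} {xB : ℕ → A} {k l n : ℕ}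

theorem mul_one_xB_one (hX : IsCend1x CA xB) (hk : 1 ≤ k) :
    CA.mul 1 (xB k) (xB 1) = xB k := by
  simpa using hX.2.2 k 1 1 hk le_rfl

theorem mul_xB_eq_zero_of_lt (hX : IsCend1x CA xB) (hk : 1 ≤ k) (hl : 1 ≤ l) (hn : l < n) :
    CA.mul n (xB k) (xB l) = 0 := by
  rw [hX.2.2 k l n hk hl, Nat.descFactorial_of_lt hn, Nat.cast_zero, zero_smul]

end IsCend1x

section Cocycle

variable {F : Type*} [Field F] {A : Type*} [AddCommGroup A] [Module F A]
  {M : Type*} [AddCommGroup M] [Module F M]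
  {CA : ConfAlg F A} {B : ConfBimod CA M} {φ : Cochain2 CA B}

namespace IsCocycle

theorem lmul_zero_add (hφ : IsCocycle φ) (m : ℕ) (a b c : A) :
    B.lmul 0 a (φ.f m b c) + φ.f 0 a (CA.mul m b c) =
      φ.f m (CA.mul 0 a b) c + B.rmul m (φ.f 0 a b) c := by
  simpa using hφ 0 m a b c

theorem lmul_one_add (hφ : IsCocycle φ) (m : ℕ) (a b c : A) :
    B.lmul 1 a (φ.f m b c) + φ.f 1 a (CA.mul m b c) =
      φ.f m (CA.mul 1 a b) c + B.rmul m (φ.f 1 a b) c +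
        (φ.f (m + 1) (CA.mul 0 a b) c + B.rmul (m + 1) (φ.f 0 a b) c) := by
  simpa [Finset.sum_range_succ] using hφ 1 m a b c

-- The cocycle identities for `(n, m) = (0, m + 1)` and `(1, m)` share all terms in `a ∘₀ b` and
-- `φ₀(a, b)`; subtracting them leaves only `a ∘₁ b` and `φ₁(a, b)` on the right.
theorem lmul_zero_succ_add (hφ : IsCocycle φ) (m : ℕ) (a b c : A) :
    B.lmul 0 a (φ.f (m + 1) b c) + φ.f 0 a (CA.mul (m + 1) b c) =
      B.lmul 1 a (φ.f m b c) + φ.f 1 a (CA.mul m b c) -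
        φ.f m (CA.mul 1 a b) c - B.rmul m (φ.f 1 a b) c := by
  rw [hφ.lmul_zero_add, hφ.lmul_one_add]
  abel

theorem lmul_zero_succ (hφ : IsCocycle φ) {m : ℕ} {a b c : A}
    (hab : CA.mul 1 a b = b) (hbc : CA.mul (m + 1) b c = 0) :
    B.lmul 0 a (φ.f (m + 1) b c) =
      B.lmul 1 a (φ.f m b c) + φ.f 1 a (CA.mul m b c) -
        φ.f m b c - B.rmul m (φ.f 1 a b) c := by
  simpa only [hab, hbc, map_zero, add_zero] using hφ.lmul_zero_succ_add m a b c

end IsCocycle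

theorem cocycle_relations_general (hφ : IsCocycle φ) {x : A}
    (hx_one : CA.mul 1 x x = x) (hx_zero : ∀ n, 1 < n → CA.mul n x x = 0) :
    B.lmul 0 x (φ.f 2 x x) = B.lmul 1 x (φ.f 1 x x) - B.rmul 1 (φ.f 1 x x) x ∧
    ∀ m : ℕ, 1 < m →
      B.lmul 0 x (φ.f (m + 1) x x) =
        B.lmul 1 x (φ.f m x x) - φ.f m x x - B.rmul m (φ.f 1 x x) x := by
  constructor
  · have h := hφ.lmul_zero_succ hx_one (hx_zero 2 one_lt_two)
    rwa [hx_one, add_sub_cancel_right] at h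
  · intro m hm
    have h := hφ.lmul_zero_succ hx_one (hx_zero (m + 1) (hm.trans m.lt_succ_self))
    rwa [hx_zero m hm, map_zero, add_zero] at h

end Cocycle

/-- Relations (8)–(9): for a 2-cocycle `φ` of `Cend_{1,x}` with values in a conformal
bimodule `M`, writing `φ_m = φ_m(x,x)`, one has `x ∘₀ φ₂ = x ∘₁ φ₁ − φ₁ ∘₁ x`, and
`x ∘₀ φ_{m+1} = x ∘₁ φ_m − φ_m − φ₁ ∘ₘ x` for every `m > 1`. -/
theorem cocycle_relations {F : Type*} [Field F] [CharZero F]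
    {A : Type*} [AddCommGroup A] [Module F A]
    {M : Type*} [AddCommGroup M] [Module F M]
    (CA : ConfAlg F A) (xB : ℕ → A) (hX : IsCend1x CA xB)
    (B : ConfBimod CA M) (φ : Cochain2 CA B) (hφ : IsCocycle φ) :
    B.lmul 0 (xB 1) (φ.f 2 (xB 1) (xB 1)) =
      B.lmul 1 (xB 1) (φ.f 1 (xB 1) (xB 1)) -
        B.rmul 1 (φ.f 1 (xB 1) (xB 1)) (xB 1) ∧
    ∀ m : ℕ, 1 < m →
      B.lmul 0 (xB 1) (φ.f (m + 1) (xB 1) (xB 1)) =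
        B.lmul 1 (xB 1) (φ.f m (xB 1) (xB 1)) - φ.f m (xB 1) (xB 1) -
          B.rmul m (φ.f 1 (xB 1) (xB 1)) (xB 1) := by
  exact cocycle_relations_general hφ (hX.mul_one_xB_one le_rfl)
    fun _ hn => hX.mul_xB_eq_zero_of_lt le_rfl le_rfl hn
end

section
/- Suppose the endomorphisms Lₙ satisfy L₁Lₘ = L₀L_{m+1} + Lₘ for all m ∈ ℤ₊. Then for every m ≥ 2 there exist scalars c₂, …, c_{m−1} ∈ 𝔽 such that L₁^m = L₁ + Σ_{k=2}^{m−1} c_k L₀^{k−1}L_k + L₀^{m−1}L_m; in particular L₁² = L₁ + L₀L₂ and L₁³ = L₁ + 3L₀L₂ + L₀²L₃. -/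
/-!
The case `m = 0` of the relation says `L₁L₀ = L₀L₁ + L₀`, so `L₁L₀ᵏ = L₀ᵏL₁ + k L₀ᵏ`. Hence on the
normally ordered monomials `e₀ = 1` and `eₖ = L₀ᵏ⁻¹Lₖ` left multiplication by `L₁` acts by
`L₁eₖ = eₖ₊₁ + k eₖ`. This is the recurrence of the Stirling numbers of the second kind `S(m, k)`,
so that `L₁ᵐ = ∑ₖ S(m, k) eₖ`.
-/

open Finset

theorem pow_smul_eq_sum_stirlingSecond {R N : Type*} [Semiring R] [AddCommMonoid N] [Module R N]
    {b : R} {e : ℕ → N} (h : ∀ k, b • e k = e (k + 1) + k • e k) (n : ℕ) :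
    b ^ n • e 0 = ∑ k ∈ range (n + 1), Nat.stirlingSecond n k • e k := by
  induction n with
  | zero => simp
  | succ n ih =>
    have sum_shift : ∑ k ∈ range (n + 1), Nat.stirlingSecond n (k + 1) • (k + 1) • e (k + 1) =
        ∑ k ∈ range (n + 1), Nat.stirlingSecond n k • k • e k := by
      rw [sum_range_succ, sum_range_succ', Nat.stirlingSecond_eq_zero_of_lt n.lt_succ_self]
      simp
    calc b ^ (n + 1) • e 0
        = ∑ k ∈ range (n + 1), Nat.stirlingSecond n k • (e (k + 1) + k • e k) := by
          simp only [pow_succ', mul_smul, ih, smul_sum, smul_comm b, h]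
      _ = ∑ k ∈ range (n + 1), Nat.stirlingSecond (n + 1) (k + 1) • e (k + 1) := by
          simp only [smul_add, sum_add_distrib, ← sum_shift, Nat.stirlingSecond_succ_succ, add_smul,
            mul_comm (_ + 1), mul_smul, add_comm]
      _ = ∑ k ∈ range (n + 2), Nat.stirlingSecond (n + 1) k • e k := by
          simp [sum_range_succ' _ (n + 1)]

theorem sum_stirlingSecond_smul_eq_add_sum_Icc_add {N : Type*} [AddCommMonoid N] (e : ℕ → N)
    {m : ℕ} (hm : 2 ≤ m) :
    ∑ k ∈ range (m + 1), Nat.stirlingSecond m k • e k =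
      e 1 + ∑ k ∈ Icc 2 (m - 1), Nat.stirlingSecond m k • e k + e m := by
  obtain ⟨n, rfl⟩ := Nat.exists_eq_add_of_le' hm
  have hIcc : Icc 2 (n + 2 - 1) = Ico 2 (n + 2) := rfl
  rw [sum_range_succ, range_eq_Ico, sum_eq_sum_Ico_succ_bot (by lia),
    sum_eq_sum_Ico_succ_bot (by lia), hIcc]
  simp [Nat.stirlingSecond_self, Nat.stirlingSecond_one_right]

section Monoid

variable {R : Type*} [Monoid R]

/-- The normally ordered monomials `1, L₁, L₀L₂, L₀²L₃, …` in a sequence `L`. The `k`-th one is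
`L₀ᵏ⁻¹Lₖ`, except that `1` is put at index `0` to start the recurrence `L₁eₖ = eₖ₊₁ + k eₖ`. -/
def normalMonomial (L : ℕ → R) : ℕ → R
  | 0 => 1
  | k + 1 => L 0 ^ k * L (k + 1)

theorem normalMonomial_of_pos (L : ℕ → R) {k : ℕ} (hk : 0 < k) :
    normalMonomial L k = L 0 ^ (k - 1) * L k := by
  cases k with
  | zero => contradiction
  | succ k => rfl

end Monoid

section Semiring

variable {R : Type*} [Semiring R] {L : ℕ → R}

theorem mul_pow_of_mul_eq_mul_add_self {a b : R} (h : b * a = a * b + a) (k : ℕ) :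
    b * a ^ k = a ^ k * b + k • a ^ k := by
  induction k with
  | zero => simp
  | succ k ih =>
    calc b * a ^ (k + 1) = a ^ k * (b * a) + k • a ^ (k + 1) := by
          rw [pow_succ, ← mul_assoc, ih, add_mul, smul_mul_assoc, mul_assoc]
      _ = a ^ (k + 1) * b + (k + 1) • a ^ (k + 1) := by
          rw [h, mul_add, ← mul_assoc, ← pow_succ, add_assoc, succ_nsmul']

theorem L1_mul_normalMonomial (hL : ∀ m, L 1 * L m = L 0 * L (m + 1) + L m) (k : ℕ) :
    L 1 * normalMonomial L k = normalMonomial L (k + 1) + k • normalMonomial L k := by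
  cases k with
  | zero => simp [normalMonomial]
  | succ k =>
    calc L 1 * (L 0 ^ k * L (k + 1))
        = L 0 ^ k * (L 1 * L (k + 1)) + k • (L 0 ^ k * L (k + 1)) := by
          rw [← mul_assoc, mul_pow_of_mul_eq_mul_add_self (hL 0), add_mul, smul_mul_assoc,
            mul_assoc]
      _ = L 0 ^ (k + 1) * L (k + 2) + (k + 1) • (L 0 ^ k * L (k + 1)) := by
          rw [hL, mul_add, ← mul_assoc, ← pow_succ, add_assoc, succ_nsmul']

theorem L1_pow_expansion_general (hL : ∀ m, L 1 * L m = L 0 * L (m + 1) + L m) {m : ℕ}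
    (hm : 2 ≤ m) :
    L 1 ^ m =
      L 1 + (∑ k ∈ Icc 2 (m - 1), Nat.stirlingSecond m k • (L 0 ^ (k - 1) * L k)) +
        L 0 ^ (m - 1) * L m := by
  have hsum : ∑ k ∈ Icc 2 (m - 1), Nat.stirlingSecond m k • normalMonomial L k =
      ∑ k ∈ Icc 2 (m - 1), Nat.stirlingSecond m k • (L 0 ^ (k - 1) * L k) :=
    sum_congr rfl fun k hk => by
      rw [normalMonomial_of_pos L (zero_lt_two.trans_le (mem_Icc.mp hk).1)]
  calc L 1 ^ m = L 1 ^ m • normalMonomial L 0 := (mul_one _).symm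
    _ = ∑ k ∈ range (m + 1), Nat.stirlingSecond m k • normalMonomial L k :=
        pow_smul_eq_sum_stirlingSecond (L1_mul_normalMonomial hL) m
    _ = _ := by
        rw [sum_stirlingSecond_smul_eq_add_sum_Icc_add _ hm, hsum, normalMonomial_of_pos L one_pos,
          normalMonomial_of_pos L (zero_lt_two.trans_le hm), Nat.sub_self, pow_zero, one_mul]

end Semiring

/-- Let `M` be a vector space over a field `F` of characteristic zero and `(Lₙ)`
endomorphisms of `M` with `L₁Lₘ = L₀L_{m+1} + Lₘ` for all `m`. Then for every
`m ≥ 2` there are scalars `c₂, …, c_{m−1} ∈ F` such that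
`L₁^m = L₁ + Σ_{k=2}^{m−1} c_k L₀^{k−1}L_k + L₀^{m−1}L_m`; in particular
`L₁² = L₁ + L₀L₂` and `L₁³ = L₁ + 3L₀L₂ + L₀²L₃`. -/
theorem L1_pow_expansion {F : Type*} [Field F] [CharZero F]
    {M : Type*} [AddCommGroup M] [Module F M]
    (L : ℕ → Module.End F M)
    (hL : ∀ m : ℕ, L 1 * L m = L 0 * L (m + 1) + L m) :
    (∀ m : ℕ, 2 ≤ m → ∃ c : ℕ → F,
      L 1 ^ m =
        L 1 + (∑ k ∈ Finset.Icc 2 (m - 1), c k • (L 0 ^ (k - 1) * L k)) +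
          L 0 ^ (m - 1) * L m) ∧
    L 1 ^ 2 = L 1 + L 0 * L 2 ∧
    L 1 ^ 3 = L 1 + (3 : F) • (L 0 * L 2) + L 0 ^ 2 * L 3 := by
  refine ⟨fun m hm => ⟨fun k => Nat.stirlingSecond m k, ?_⟩, ?_, ?_⟩
  · simpa only [Nat.cast_smul_eq_nsmul] using L1_pow_expansion_general hL hm
  · simpa using L1_pow_expansion_general hL le_rfl
  · simpa [Nat.stirlingSecond, ofNat_smul_eq_nsmul] using
      L1_pow_expansion_general hL (Nat.le_succ 2)
end

section
/- For all polynomials B, C ∈ R[x] and all m, n ∈ ℤ₊: B^{(n)} · C^{(m)} = Σ_{s=0}^{n} (−1)^s binom(n,s) (B · C^{(m+s)})^{(n−s)}, where P^{(k)} denotes the k-th iterated formal derivative of the polynomial P. (This identity expresses the associativity axiom (a ∘ₙ b) ∘ₘ c = Σ_{s≥0} (−1)^s binom(n,s) a ∘_{n−s} (b ∘_{m+s} c) for the conformal products A ∘ₙ B = A · B^{(n)} on polynomials, which define the algebra Cend₁.) -/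
/-!
On `M ⊗ N` put `Δ = d ⊗ 1 + 1 ⊗ e`, the operator that a bilinear product obeying the Leibniz rule
intertwines with the operator `f` on its target. Then `d ⊗ 1 = Δ - 1 ⊗ e` is a difference of
commuting operators, and the identity is the binomial expansion of `(Δ - 1 ⊗ e) ^ n`, evaluated at
a pure tensor and multiplied out.
-/

open Polynomial TensorProduct

theorem sub_pow_of_commute {k A : Type*} [CommRing k] [Ring A] [Algebra k A] {x y : A}
    (h : Commute x y) (n : ℕ) :
    (x - y) ^ n =
      ∑ s ∈ Finset.range (n + 1), ((-1 : k) ^ s * (n.choose s : k)) • (x ^ (n - s) * y ^ s) := by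
  rw [sub_eq_neg_add, h.symm.neg_left.add_pow]
  refine Finset.sum_congr rfl fun s _ => ?_
  rw [neg_pow, mul_assoc ((-1) ^ s), (h.pow_pow (n - s) s).symm.eq, mul_assoc ((-1) ^ s),
    ← (Nat.cast_commute (n.choose s) (x ^ (n - s) * y ^ s)).eq, ← mul_assoc, Algebra.smul_def]
  simp only [map_mul, map_pow, map_neg, map_one, map_natCast]

section LeibnizOperator

variable {k M N P : Type*} [CommSemiring k] [AddCommMonoid M] [AddCommMonoid N] [AddCommMonoid P]
  [Module k M] [Module k N] [Module k P]

/-- The operator `d ⊗ 1 + 1 ⊗ e` on `M ⊗ N`: the universal operator satisfying the Leibniz rule with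
respect to `d` and `e`. -/
def leibnizOperator (d : Module.End k M) (e : Module.End k N) : Module.End k (M ⊗[k] N) :=
  d.rTensor N + e.lTensor M

theorem commute_leibnizOperator_lTensor (d : Module.End k M) (e : Module.End k N) :
    Commute (leibnizOperator d e) (e.lTensor M) := by
  have commute_factors : Commute (d.rTensor N) (e.lTensor M) :=
    (LinearMap.rTensor_comp_lTensor M d e).trans (LinearMap.lTensor_comp_rTensor M d e).symm
  exact commute_factors.add_left (Commute.refl _)

theorem lift_leibnizOperator_pow
    {β : M →ₗ[k] N →ₗ[k] P} {d : Module.End k M} {e : Module.End k N} {f : Module.End k P}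
    (leibniz : ∀ a b, f (β a b) = β (d a) b + β a (e b)) (n : ℕ) (t : M ⊗[k] N) :
    lift β ((leibnizOperator d e ^ n) t) = (f ^ n) (lift β t) := by
  have intertwines : lift β ∘ₗ leibnizOperator d e = f ∘ₗ lift β :=
    TensorProduct.ext' fun a b => by simp [leibnizOperator, leibniz]
  exact (LinearMap.congr_fun
    (Module.End.commute_pow_left_of_commute intertwines.symm n) t).symm

end LeibnizOperator

section Expansion

variable {k M N P : Type*} [CommRing k] [AddCommGroup M] [AddCommMonoid N] [AddCommMonoid P]
  [Module k M] [Module k N] [Module k P]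

theorem rTensor_pow_eq_sum (d : Module.End k M) (e : Module.End k N) (n : ℕ) :
    (d ^ n).rTensor N =
      ∑ s ∈ Finset.range (n + 1), ((-1 : k) ^ s * (n.choose s : k)) •
        (leibnizOperator d e ^ (n - s) * (e ^ s).lTensor M) := by
  have rTensor_eq_sub : d.rTensor N = leibnizOperator d e - e.lTensor M :=
    (add_sub_cancel_right _ _).symm
  simp only [← LinearMap.rTensor_pow, ← LinearMap.lTensor_pow, rTensor_eq_sub]
  exact sub_pow_of_commute (commute_leibnizOperator_lTensor d e) n

theorem bilinear_pow_apply_eq_sum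
    {β : M →ₗ[k] N →ₗ[k] P} {d : Module.End k M} {e : Module.End k N} {f : Module.End k P}
    (leibniz : ∀ a b, f (β a b) = β (d a) b + β a (e b)) (n : ℕ)
    (a : M) (b : N) :
    β ((d ^ n) a) b =
      ∑ s ∈ Finset.range (n + 1), ((-1 : k) ^ s * (n.choose s : k)) •
        (f ^ (n - s)) (β a ((e ^ s) b)) := by
  have expansion := congrArg (lift β) (LinearMap.congr_fun (rTensor_pow_eq_sum d e n) (a ⊗ₜ b))
  simpa only [LinearMap.sum_apply, LinearMap.smul_apply, Module.End.mul_apply, map_sum, map_smul,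
    lift_leibnizOperator_pow leibniz, LinearMap.rTensor_tmul, LinearMap.lTensor_tmul, lift.tmul]
    using expansion

end Expansion

theorem derivative_conformal_assoc_general {R : Type*} [Ring R] (B C : R[X]) (m n : ℕ) :
    derivative^[n] B * derivative^[m] C =
      ∑ s ∈ Finset.range (n + 1),
        ((-1 : R) ^ s * (n.choose s : R)) •
          derivative^[n - s] (B * derivative^[m + s] C) := by
  -- Multiplication is not `R`-bilinear when `R` is noncommutative, so the scalars are integers.
  let D : Module.End ℤ R[X] := derivative.toAddMonoidHom.toIntLinearMap
  have D_pow_apply (i : ℕ) (p : R[X]) : (D ^ i) p = derivative^[i] p := Module.End.pow_apply D i p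
  have expansion := bilinear_pow_apply_eq_sum (β := LinearMap.mul ℤ R[X]) (d := D) (e := D) (f := D)
    (fun _ _ => derivative_mul) n B (derivative^[m] C)
  simp only [LinearMap.mul_apply', D_pow_apply, ← Function.iterate_add_apply] at expansion
  rw [expansion]
  refine Finset.sum_congr rfl fun s _ => ?_
  rw [add_comm s m, ← Int.cast_smul_eq_zsmul R]
  push_cast
  rfl

/-- For polynomials `B, C ∈ R[x]` over a commutative `ℚ`-algebra `R` and all
`m, n ∈ ℤ₊`: `B⁽ⁿ⁾ · C⁽ᵐ⁾ = Σ_{s=0}^{n} (−1)^s binom(n,s) (B · C⁽ᵐ⁺ˢ⁾)⁽ⁿ⁻ˢ⁾`,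
where `P⁽ᵏ⁾` is the `k`-th iterated formal derivative. This is the associativity
axiom `(a ∘ₙ b) ∘ₘ c = Σ_s (−1)^s binom(n,s) a ∘_{n−s} (b ∘_{m+s} c)` for the
conformal products `A ∘ₙ B = A · B⁽ⁿ⁾` defining `Cend₁`. -/
theorem derivative_conformal_assoc {R : Type*} [CommRing R] [Algebra ℚ R]
    (B C : Polynomial R) (m n : ℕ) :
    (Polynomial.derivative^[n] B) * (Polynomial.derivative^[m] C) =
      ∑ s ∈ Finset.range (n + 1),
        ((-1 : R) ^ s * (n.choose s : R)) •
          Polynomial.derivative^[n - s] (B * Polynomial.derivative^[m + s] C) :=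
  derivative_conformal_assoc_general B C m n
end
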